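/- arXiv:1809.09286 — 3 statements merged into one kernel-verified Lean document; each statement's English description precedes it below -/
import Mathlib

section
/- The ℤ-submodule of ℂ⁶ generated by {ξ₁′, ξ₂′, ξ₃′, ξ₅′, ξ₆′} is a free ℤ-module of rank 5 and is a direct summand of the ℤ-submodule of ℂ⁶ generated by {η₁, η₂, η₃, η₄, η₅, η₆, η₇, η₈, η₉}. -/
open Complex

/-- The basis vectors `η₁, …, η₉` of the range of the Chern–Connes character `𝐓₄`. -/
noncomputable def η (θ : ℝ) : Fin 9 → Fin 6 → ℂ :=
  ![![1/2, 0, 0, 1/2, 0, 0],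
    ![1/2, (1 - I)/4, 0, 0, 0, 0],
    ![1/4, 1/4, 0, 1/4, 0, 0],
    ![1/2, 0, 0, 0, 1/2, 0],
    ![1/2, 0, (1 - I)/4, 0, 0, 0],
    ![1/4, 0, 1/4, 0, 1/4, 0],
    ![(θ : ℂ)/4, (1 + I)/8, (1 + I)/8, 1/8, 1/8, 1/4],
    ![(θ : ℂ)/4, (-1 + I)/8, (-1 + I)/8, -(1/8), -(1/8), -(1/4)],
    ![(θ : ℂ)/4, (-1 - I)/8, (-1 - I)/8, 1/8, 1/8, 1/4]]

/-- The images `ξ₁′, …, ξ₆′` of the generators of `K₀(A_θ ⋊ ℤ₂)` under `𝐓₄ ∘ ι⋆`. -/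
noncomputable def ξ' (θ : ℝ) : Fin 6 → Fin 6 → ℂ :=
  ![![1, 0, 0, 0, 0, 0],
    ![1/2, 0, 0, 1/2, 0, 0],
    ![1/2, 0, 0, 0, 0, 1/2],
    ![1/2, 0, 0, 0, 0, 1/2],
    ![1/2, 0, 0, 0, 1/2, 0],
    ![(θ : ℂ)/2, 0, 0, 1/4, -(1/4), 0]]

/-- An integer relation `x + y θ = 0` with `θ` irrational forces `y = 0`. -/
lemma irr_rel (θ : ℝ) (hθ : Irrational θ) (x y : ℤ) (h : (x : ℝ) + y * θ = 0) : y = 0 := by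
  by_contra hy
  apply hθ
  refine ⟨-(x : ℚ) / y, ?_⟩
  have hy' : (y : ℝ) ≠ 0 := by exact_mod_cast hy
  push_cast
  field_simp
  linarith

/-- The nine vectors `ξ₁′, ξ₂′, ξ₃′, ξ₅′, ξ₆′, η₂, η₃, η₆, η₇` are independent over `ℤ`. -/
lemma core_indep (θ : ℝ) (hθ : Irrational θ) (a b c d e p q r s : ℤ)
    (h : a • ξ' θ 0 + b • ξ' θ 1 + c • ξ' θ 2 + d • ξ' θ 4 + e • ξ' θ 5
      + (p • η θ 1 + q • η θ 2 + r • η θ 5 + s • η θ 6) = 0) :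
    a = 0 ∧ b = 0 ∧ c = 0 ∧ d = 0 ∧ e = 0 ∧ p = 0 ∧ q = 0 ∧ r = 0 ∧ s = 0 := by
  have h0 := congrArg Complex.re (congrFun h 0)
  have h1 := congrArg Complex.re (congrFun h 1)
  have h1' := congrArg Complex.im (congrFun h 1)
  have h2 := congrArg Complex.re (congrFun h 2)
  have h2' := congrArg Complex.im (congrFun h 2)
  have h3 := congrArg Complex.re (congrFun h 3)
  have h4 := congrArg Complex.re (congrFun h 4)
  have h5 := congrArg Complex.re (congrFun h 5)
  simp [ξ', η] at h0 h1 h1' h2 h2' h3 h4 h5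
  have he : 2 * e + s = 0 := by
    apply irr_rel θ hθ (4 * a + 2 * b + 2 * c + 2 * d + 2 * p + q + r)
    push_cast
    linarith
  have k1 : 2 * p + 2 * q + s = 0 := by
    have : (2 * p + 2 * q + s : ℝ) = 0 := by linarith
    exact_mod_cast this
  have k1' : s = 2 * p := by
    have : (s : ℝ) = 2 * p := by linarith
    exact_mod_cast this
  have k2 : 2 * r + s = 0 := by
    have : (2 * r + s : ℝ) = 0 := by linarith
    exact_mod_cast this
  have k3 : 4 * b + 2 * e + 2 * q + s = 0 := by
    have : (4 * b + 2 * e + 2 * q + s : ℝ) = 0 := by linarith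
    exact_mod_cast this
  have k4 : 4 * d - 2 * e + 2 * r + s = 0 := by
    have : (4 * d - 2 * e + 2 * r + s : ℝ) = 0 := by linarith
    exact_mod_cast this
  have k5 : 2 * c + s = 0 := by
    have : (2 * c + s : ℝ) = 0 := by linarith
    exact_mod_cast this
  have k0 : 4 * a + 2 * b + 2 * c + 2 * d + 2 * p + q + r = 0 := by
    have hz : (2 * e + s : ℝ) = 0 := by exact_mod_cast he
    have : (4 * a + 2 * b + 2 * c + 2 * d + 2 * p + q + r : ℝ) = 0 := by
      linear_combination 4 * h0 - θ * hz
    exact_mod_cast this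
  lia

/-- The ℤ-submodule of ℂ⁶ generated by `{ξ₁′, ξ₂′, ξ₃′, ξ₅′, ξ₆′}` is
free of rank 5 and is a direct summand of the ℤ-submodule generated by the `η`'s. -/
theorem xi_span_free_and_direct_summand (θ : ℝ) (hθ : Irrational θ) :
    Module.Free ℤ (Submodule.span ℤ {ξ' θ 0, ξ' θ 1, ξ' θ 2, ξ' θ 4, ξ' θ 5}) ∧
    Module.finrank ℤ (Submodule.span ℤ {ξ' θ 0, ξ' θ 1, ξ' θ 2, ξ' θ 4, ξ' θ 5}) = 5 ∧
    Submodule.span ℤ {ξ' θ 0, ξ' θ 1, ξ' θ 2, ξ' θ 4, ξ' θ 5}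
      ≤ Submodule.span ℤ (Set.range (η θ)) ∧
    ∃ P : Submodule ℤ (Fin 6 → ℂ),
      P ≤ Submodule.span ℤ (Set.range (η θ)) ∧
      Submodule.span ℤ {ξ' θ 0, ξ' θ 1, ξ' θ 2, ξ' θ 4, ξ' θ 5} ⊓ P = ⊥ ∧
      Submodule.span ℤ {ξ' θ 0, ξ' θ 1, ξ' θ 2, ξ' θ 4, ξ' θ 5} ⊔ P
        = Submodule.span ℤ (Set.range (η θ)) := by
  have hη : ∀ i, η θ i ∈ Submodule.span ℤ (Set.range (η θ)) :=
    fun i => Submodule.subset_span ⟨i, rfl⟩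
  have hli : LinearIndependent ℤ ![ξ' θ 0, ξ' θ 1, ξ' θ 2, ξ' θ 4, ξ' θ 5] := by
    rw [Fintype.linearIndependent_iff]
    intro g hg
    have := core_indep θ hθ (g 0) (g 1) (g 2) (g 3) (g 4) 0 0 0 0
      (by simpa [Fin.sum_univ_succ, add_assoc] using hg)
    obtain ⟨h0, h1, h2, h3, h4, -⟩ := this
    intro i
    fin_cases i <;> assumption
  have hr : Set.range ![ξ' θ 0, ξ' θ 1, ξ' θ 2, ξ' θ 4, ξ' θ 5]
      = {ξ' θ 0, ξ' θ 1, ξ' θ 2, ξ' θ 4, ξ' θ 5} := by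
    simp only [Matrix.range_cons, Matrix.range_empty, Set.union_empty, Set.singleton_union]
  have e0 : ξ' θ 0 = η θ 0 + η θ 1 - 2 • η θ 2 + η θ 3 + η θ 4 - 2 • η θ 5 + η θ 6 - η θ 8 := by
    funext i; fin_cases i <;> simp [ξ', η] <;> ring
  have e1 : ξ' θ 1 = η θ 0 := by simp [ξ', η]
  have e2 : ξ' θ 2 = η θ 0 + η θ 1 - 3 • η θ 2 + η θ 3 + η θ 4 - 3 • η θ 5 + 2 • η θ 6
      - η θ 7 - η θ 8 := by
    funext i; fin_cases i <;> simp [ξ', η] <;> ring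
  have e4 : ξ' θ 4 = η θ 3 := by simp [ξ', η]
  have e5 : ξ' θ 5 = η θ 2 - η θ 3 + η θ 5 + η θ 7 + η θ 8 := by
    funext i; fin_cases i <;> simp [ξ', η] <;> ring
  have hle : Submodule.span ℤ {ξ' θ 0, ξ' θ 1, ξ' θ 2, ξ' θ 4, ξ' θ 5}
      ≤ Submodule.span ℤ (Set.range (η θ)) := by
    rw [Submodule.span_le]
    set S := Submodule.span ℤ (Set.range (η θ)) with hS
    rintro x (rfl | rfl | rfl | rfl | rfl)
    · rw [e0]
      exact S.sub_mem (S.add_mem (S.sub_mem (S.add_mem (S.add_mem (S.sub_mem (S.add_mem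
        (hη 0) (hη 1)) (S.nsmul_mem (hη 2) 2)) (hη 3)) (hη 4)) (S.nsmul_mem (hη 5) 2)) (hη 6)) (hη 8)
    · rw [e1]; exact hη 0
    · rw [e2]
      exact S.sub_mem (S.sub_mem (S.add_mem (S.sub_mem (S.add_mem (S.add_mem (S.sub_mem (S.add_mem
        (hη 0) (hη 1)) (S.nsmul_mem (hη 2) 3)) (hη 3)) (hη 4)) (S.nsmul_mem (hη 5) 3))
        (S.nsmul_mem (hη 6) 2)) (hη 7)) (hη 8)
    · rw [e4]; exact hη 3
    · rw [e5]
      exact S.add_mem (S.add_mem (S.add_mem (S.sub_mem (hη 2) (hη 3)) (hη 5)) (hη 7)) (hη 8)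
  have hP : Submodule.span ℤ {η θ 1, η θ 2, η θ 5, η θ 6} ≤ Submodule.span ℤ (Set.range (η θ)) := by
    rw [Submodule.span_le]
    rintro x (rfl | rfl | rfl | rfl) <;> exact hη _
  refine ⟨?_, ?_, hle, Submodule.span ℤ {η θ 1, η θ 2, η θ 5, η θ 6}, hP, ?_, ?_⟩
  · rw [← hr]
    exact Module.Free.of_basis (Module.Basis.span hli)
  · rw [← hr, finrank_span_eq_card hli]
    rfl
  · rw [eq_bot_iff]
    rintro x ⟨hx, hy⟩
    simp only [SetLike.mem_coe, Submodule.mem_span_insert, Submodule.mem_span_singleton] at hx hy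
    obtain ⟨a, _, ⟨b, _, ⟨c, _, ⟨d, _, ⟨e, rfl⟩, rfl⟩, rfl⟩, rfl⟩, hx⟩ := hx
    obtain ⟨p, _, ⟨q, _, ⟨r, _, ⟨s, rfl⟩, rfl⟩, rfl⟩, hy⟩ := hy
    have hxy := hx.symm.trans hy
    obtain ⟨-, -, -, -, -, hp, hq, hr, hs⟩ := core_indep θ hθ a b c d e (-p) (-q) (-r) (-s) (by
      rw [← sub_eq_zero] at hxy
      rw [← hxy]
      module)
    rw [neg_eq_zero] at hp hq hr hs
    subst hp hq hr hs
    simp [hy]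
  · apply le_antisymm (sup_le hle hP)
    rw [Submodule.span_le]
    set T := Submodule.span ℤ {ξ' θ 0, ξ' θ 1, ξ' θ 2, ξ' θ 4, ξ' θ 5} ⊔
      Submodule.span ℤ {η θ 1, η θ 2, η θ 5, η θ 6} with hT
    have hx : ∀ x ∈ ({ξ' θ 0, ξ' θ 1, ξ' θ 2, ξ' θ 4, ξ' θ 5} : Set (Fin 6 → ℂ)), x ∈ T :=
      fun x h => Submodule.mem_sup_left (Submodule.subset_span h)
    have hy : ∀ x ∈ ({η θ 1, η θ 2, η θ 5, η θ 6} : Set (Fin 6 → ℂ)), x ∈ T :=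
      fun x h => Submodule.mem_sup_right (Submodule.subset_span h)
    have x0 := hx (ξ' θ 0) (by simp)
    have x1 := hx (ξ' θ 1) (by simp)
    have x2 := hx (ξ' θ 2) (by simp)
    have x4 := hx (ξ' θ 4) (by simp)
    have x5 := hx (ξ' θ 5) (by simp)
    have y1 := hy (η θ 1) (by simp)
    have y2 := hy (η θ 2) (by simp)
    have y5 := hy (η θ 5) (by simp)
    have y6 := hy (η θ 6) (by simp)
    have y0 : η θ 0 ∈ T := e1 ▸ x1
    have y3 : η θ 3 ∈ T := e4 ▸ x4
    have y7 : η θ 7 ∈ T := by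
      have : η θ 7 = ξ' θ 0 - ξ' θ 2 - η θ 2 - η θ 5 + η θ 6 := by rw [e0, e2]; module
      rw [this]
      exact T.add_mem (T.sub_mem (T.sub_mem (T.sub_mem x0 x2) y2) y5) y6
    have y8 : η θ 8 ∈ T := by
      have : η θ 8 = ξ' θ 5 - η θ 2 + η θ 3 - η θ 5 - η θ 7 := by rw [e5]; module
      rw [this]
      exact T.sub_mem (T.sub_mem (T.add_mem (T.sub_mem x5 y2) y3) y5) y7
    have y4 : η θ 4 ∈ T := by
      have : η θ 4 = ξ' θ 0 - η θ 0 - η θ 1 + 2 • η θ 2 - η θ 3 + 2 • η θ 5 - η θ 6 + η θ 8 := by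
        rw [e0]; module
      rw [this]
      exact T.add_mem (T.sub_mem (T.add_mem (T.sub_mem (T.add_mem (T.sub_mem (T.sub_mem x0 y0) y1)
        (T.nsmul_mem y2 2)) y3) (T.nsmul_mem y5 2)) y6) y8
    rintro _ ⟨i, rfl⟩
    fin_cases i <;> assumption
end

section
/- The nine vectors ξ₂′ (= η₁), η₂, η₃, ξ₅′ (= η₄), η₆, η₇, ξ₁′, ξ₃′, ξ₆′ are ℤ-linearly independent in ℂ⁶ and generate the same ℤ-submodule of ℂ⁶ as {η₁, η₂, η₃, η₄, η₅, η₆, η₇, η₈, η₉}; that is, they form a ℤ-basis of that submodule. -/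
open Complex

set_option maxHeartbeats 4000000

/-- The nine vectors `ξ₂′ (= η₁), η₂, η₃, ξ₅′ (= η₄), η₆, η₇, ξ₁′, ξ₃′, ξ₆′`
are ℤ-linearly independent and generate the same ℤ-submodule of ℂ⁶ as
`{η₁, …, η₉}`: they form a ℤ-basis of that submodule. -/
theorem new_basis_for_eta_span (θ : ℝ) (hθ : Irrational θ) :
    LinearIndependent ℤ
      ![ξ' θ 1, η θ 1, η θ 2, ξ' θ 4, η θ 5, η θ 6, ξ' θ 0, ξ' θ 2, ξ' θ 5] ∧
    Submodule.span ℤ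
        (Set.range ![ξ' θ 1, η θ 1, η θ 2, ξ' θ 4, η θ 5, η θ 6, ξ' θ 0, ξ' θ 2, ξ' θ 5])
      = Submodule.span ℤ (Set.range (η θ)) := by
  constructor
  · rw [Fintype.linearIndependent_iff]
    intro g hg
    have h0 := congrArg Complex.re (congrFun hg 0)
    have h1 := congrArg Complex.re (congrFun hg 1)
    have him1 := congrArg Complex.im (congrFun hg 1)
    have h2 := congrArg Complex.re (congrFun hg 2)
    have him2 := congrArg Complex.im (congrFun hg 2)
    have h3 := congrArg Complex.re (congrFun hg 3)
    have h4 := congrArg Complex.re (congrFun hg 4)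
    have h5 := congrArg Complex.re (congrFun hg 5)
    clear hg
    simp [Fin.sum_univ_succ, η, ξ', Fin.succ] at h0 h1 him1 h2 him2 h3 h4 h5
    have e5 : (g 5 : ℝ) = 0 := by exact_mod_cast him2
    have e1 : (g 1 : ℝ) = 0 := by linarith
    have e2 : (g 2 : ℝ) = 0 := by linarith
    have e4 : (g 4 : ℝ) = 0 := by linarith
    have e7 : (g 7 : ℝ) = 0 := by linarith
    have k : θ * (g 8 : ℝ) = ((- g 0 - g 3 - 2 * g 6 : ℤ) : ℝ) := by
      rw [e5, e1, e2, e4, e7] at h0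
      push_cast
      linarith
    have e8 : g 8 = 0 := by
      by_contra hne
      exact (hθ.mul_intCast hne).ne_int _ k
    have er8 : (g 8 : ℝ) = 0 := by exact_mod_cast e8
    have e0 : (g 0 : ℝ) = 0 := by linarith
    have e3 : (g 3 : ℝ) = 0 := by linarith
    have e6 : (g 6 : ℝ) = 0 := by
      rw [er8] at k
      push_cast at k
      linarith
    intro i
    have : (g i : ℝ) = 0 := by fin_cases i <;> assumption
    exact_mod_cast this
  · apply le_antisymm <;> rw [Submodule.span_le] <;> rintro _ ⟨i, rfl⟩ <;>
      rw [SetLike.mem_coe, Submodule.mem_span_range_iff_exists_fun]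
    · refine ⟨(![![1, 0, 0, 0, 0, 0, 0, 0, 0], ![0, 1, 0, 0, 0, 0, 0, 0, 0],
        ![0, 0, 1, 0, 0, 0, 0, 0, 0], ![0, 0, 0, 1, 0, 0, 0, 0, 0],
        ![0, 0, 0, 0, 0, 1, 0, 0, 0], ![0, 0, 0, 0, 0, 0, 1, 0, 0],
        ![1, 1, -2, 1, 1, -2, 1, 0, -1], ![1, 1, -3, 1, 1, -3, 2, -1, -1],
        ![0, 0, 1, -1, 0, 1, 0, 1, 1]] : Fin 9 → Fin 9 → ℤ) i, ?_⟩
      ext j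
      fin_cases i <;> fin_cases j <;> simp [Fin.sum_univ_succ, η, ξ', Fin.succ] <;> ring
    · refine ⟨(![![1, 0, 0, 0, 0, 0, 0, 0, 0], ![0, 1, 0, 0, 0, 0, 0, 0, 0],
        ![0, 0, 1, 0, 0, 0, 0, 0, 0], ![0, 0, 0, 1, 0, 0, 0, 0, 0],
        ![-1, -1, 2, 0, 2, -2, 0, 1, 1], ![0, 0, 0, 0, 1, 0, 0, 0, 0],
        ![0, 0, 0, 0, 0, 1, 0, 0, 0], ![0, 0, -1, 0, -1, 1, 1, -1, 0],
        ![0, 0, 0, 1, 0, -1, -1, 1, 1]] : Fin 9 → Fin 9 → ℤ) i, ?_⟩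
      ext j
      fin_cases i <;> fin_cases j <;> simp [Fin.sum_univ_succ, η, ξ', Fin.succ] <;> ring
end

section
/- The ℤ-submodule of ℂ⁶ generated by {ξ₁″, ξ₂″, ξ₃″, ξ₆″} is a free ℤ-module of rank 4 and is a direct summand of the ℤ-submodule of ℂ⁶ generated by {μ₁, μ₂, μ₃, μ₄, μ₅, μ₆, μ₇, μ₈, μ₉, μ₁₀}. -/
open Complex

/-- The sixth root of unity `ω = e^{πi/3} = (1 + i√3)/2`. -/
noncomputable def ω : ℂ := (1 + Real.sqrt 3 * I) / 2

/-- The basis vectors `μ₁, …, μ₁₀` of the range of the Chern–Connes character `𝐓₆`. -/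
noncomputable def μ (θ : ℝ) : Fin 10 → Fin 6 → ℂ :=
  ![![1, 0, 0, 0, 0, 0],
    ![1/6, 1/6, 1/6, 1/6, 1/6, 1/6],
    ![1/6, (1 - ω)/6, -ω/6, -ω/6, -(1/6), -(1/6)],
    ![1/6, -ω/6, (ω - 1)/6, (ω - 1)/6, 1/6, 1/6],
    ![1/6, -(1/6), 1/6, 1/6, -(1/6), -(1/6)],
    ![1/6, (ω - 1)/6, -ω/6, -ω/6, 1/6, 1/6],
    ![1/3, 0, 0, 1/3, 0, 0],
    ![1/3, 0, 0, -ω/3, 0, 0],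
    ![1/2, 0, 0, 0, 0, 1/2],
    ![(θ : ℂ)/6, ω/6, (1 + ω)/18, (1 + ω)/6, 1/12, 1/3]]

/-- The images `ξ₁″, …, ξ₆″` of the generators of `K₀(A_θ ⋊ ℤ₂)` under `𝐓₆ ∘ ι′⋆`. -/
noncomputable def ξ'' (θ : ℝ) : Fin 6 → Fin 6 → ℂ :=
  ![![1, 0, 0, 0, 0, 0],
    ![1/2, 0, 0, 0, 1/2, 1/2],
    ![1/2, 0, 0, 0, 0, 1/2],
    ![1/2, 0, 0, 0, 0, 1/2],
    ![1/2, 0, 0, 0, 0, 1/2],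
    ![(θ : ℂ)/2, 0, 0, 0, 1/4, 0]]


lemma omega_re_aux : ω.re = 1 / 2 := by
  simp [ω]

lemma omega_im_aux : ω.im = Real.sqrt 3 / 2 := by
  simp [ω]

/-- The generators of the subgroup, as a family. -/
noncomputable def xiFam (θ : ℝ) : Fin 4 → Fin 6 → ℂ := ![ξ'' θ 0, ξ'' θ 1, ξ'' θ 2, ξ'' θ 5]

/-- Generators of the complement. -/
noncomputable def compFam (θ : ℝ) : Fin 6 → Fin 6 → ℂ :=
  ![μ θ 2, μ θ 3, μ θ 5, μ θ 6, μ θ 7, μ θ 9]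

lemma xi_set_eq (θ : ℝ) :
    ({ξ'' θ 0, ξ'' θ 1, ξ'' θ 2, ξ'' θ 5} : Set (Fin 6 → ℂ)) = Set.range (xiFam θ) := by
  ext x
  simp [xiFam]
  tauto

/-- Two real numbers `x`, `y` with `x + y ω = 0` both vanish. -/
lemma omega_indep {z : ℂ} (x y : ℝ) (hz : z = x + y * ω) (h : z = 0) : x = 0 ∧ y = 0 := by
  rw [hz] at h
  have h1 := congrArg Complex.re h
  have h2 := congrArg Complex.im h
  simp [omega_re_aux, omega_im_aux] at h1 h2
  subst h2
  simpa using h1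

lemma key (θ : ℝ) (hθ : Irrational θ) (g : Fin 4 → ℤ) (f : Fin 6 → ℤ)
    (h : ∑ i, g i • xiFam θ i = ∑ i, f i • compFam θ i) : g = 0 := by
  have h0 := congrFun h 0
  have h1 := congrFun h 1
  have h2 := congrFun h 2
  have h3 := congrFun h 3
  have h4 := congrFun h 4
  have h5 := congrFun h 5
  simp [Fin.sum_univ_succ, xiFam, compFam, ξ'', μ] at h0 h1 h2 h3 h4 h5
  obtain ⟨a1, b1⟩ := omega_indep (((f 0 : ℝ) - f 2) / 6) ((-f 0 - f 1 + f 2 + f 5 : ℝ) / 6)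
    (by push_cast; ring) h1.symm
  obtain ⟨a2, b2⟩ := omega_indep (-(f 1 : ℝ) / 6 + f 5 / 18)
    ((-f 0 + f 1 - f 2 : ℝ) / 6 + f 5 / 18) (by push_cast; ring) h2.symm
  obtain ⟨a3, b3⟩ := omega_indep (-(f 1 : ℝ) / 6 + f 3 / 3 + f 5 / 6)
    ((-f 0 + f 1 - f 2 : ℝ) / 6 - f 4 / 3 + f 5 / 6) (by push_cast; ring) h3.symm
  have r0 : (f 0 : ℝ) = 0 := by linarith
  have r1 : (f 1 : ℝ) = 0 := by linarith
  have r2 : (f 2 : ℝ) = 0 := by linarith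
  have r5 : (f 5 : ℝ) = 0 := by linarith
  have r3 : (f 3 : ℝ) = 0 := by linarith
  have r4 : (f 4 : ℝ) = 0 := by linarith
  norm_cast at r0 r1 r2 r3 r4 r5
  simp only [r0, r1, r2, r3, r4, r5] at h0 h4 h5
  have k0 : (g 0 : ℝ) + g 1 / 2 + g 2 / 2 + g 3 * θ / 2 = 0 := by
    have : (((g 0 : ℝ) + g 1 / 2 + g 2 / 2 + g 3 * θ / 2 : ℝ) : ℂ) = 0 := by
      push_cast; linear_combination h0
    exact_mod_cast this
  have k4 : (g 1 : ℝ) / 2 + g 3 / 4 = 0 := by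
    have : (((g 1 : ℝ) / 2 + g 3 / 4 : ℝ) : ℂ) = 0 := by
      push_cast; linear_combination h4
    exact_mod_cast this
  have k5 : (g 1 : ℝ) / 2 + g 2 / 2 = 0 := by
    have : (((g 1 : ℝ) / 2 + g 2 / 2 : ℝ) : ℂ) = 0 := by
      push_cast; linear_combination h5
    exact_mod_cast this
  have g3 : g 3 = 0 := by
    by_contra hne
    have hi := (hθ.intCast_mul hne).ne_int (-(2 * g 0 + g 1 + g 2))
    apply hi
    push_cast
    linarith
  have g3r : (g 3 : ℝ) = 0 := by exact_mod_cast g3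
  rw [g3r] at k0 k4
  have g1r : (g 1 : ℝ) = 0 := by linarith
  have g2r : (g 2 : ℝ) = 0 := by linarith
  have g0r : (g 0 : ℝ) = 0 := by linarith
  norm_cast at g0r g1r g2r
  ext i
  fin_cases i
  exacts [g0r, g1r, g2r, g3]

/-- The ℤ-submodule of ℂ⁶ generated by `{ξ₁″, ξ₂″, ξ₃″, ξ₆″}` is free
of rank 4 and is a direct summand of the ℤ-submodule generated by `{μ₁, …, μ₁₀}`. -/
theorem xi_doubleprime_span_free_and_direct_summand (θ : ℝ) (hθ : Irrational θ) :
    Module.Free ℤ (Submodule.span ℤ {ξ'' θ 0, ξ'' θ 1, ξ'' θ 2, ξ'' θ 5}) ∧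
    Module.finrank ℤ (Submodule.span ℤ {ξ'' θ 0, ξ'' θ 1, ξ'' θ 2, ξ'' θ 5}) = 4 ∧
    Submodule.span ℤ {ξ'' θ 0, ξ'' θ 1, ξ'' θ 2, ξ'' θ 5}
      ≤ Submodule.span ℤ (Set.range (μ θ)) ∧
    ∃ P : Submodule ℤ (Fin 6 → ℂ),
      P ≤ Submodule.span ℤ (Set.range (μ θ)) ∧
      Submodule.span ℤ {ξ'' θ 0, ξ'' θ 1, ξ'' θ 2, ξ'' θ 5} ⊓ P = ⊥ ∧
      Submodule.span ℤ {ξ'' θ 0, ξ'' θ 1, ξ'' θ 2, ξ'' θ 5} ⊔ P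
        = Submodule.span ℤ (Set.range (μ θ)) := by
  have e0 : ξ'' θ 0 = μ θ 0 := by simp [ξ'', μ]
  have e1 : ξ'' θ 1 = μ θ 1 + μ θ 3 + μ θ 5 := by
    ext i; fin_cases i <;> simp [ξ'', μ] <;> ring
  have e2 : ξ'' θ 2 = μ θ 8 := by simp [ξ'', μ]
  have e5 : ξ'' θ 5 = (2:ℤ) • μ θ 2 + (2:ℤ) • μ θ 3 + μ θ 4 + μ θ 5 - μ θ 6 + μ θ 7
      - (2:ℤ) • μ θ 8 + (3:ℤ) • μ θ 9 := by
    ext i; fin_cases i <;> simp [ξ'', μ] <;> ring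
  have hμ : ∀ i, μ θ i ∈ Submodule.span ℤ (Set.range (μ θ)) := fun i =>
    Submodule.subset_span ⟨i, rfl⟩
  have hle : Submodule.span ℤ {ξ'' θ 0, ξ'' θ 1, ξ'' θ 2, ξ'' θ 5}
      ≤ Submodule.span ℤ (Set.range (μ θ)) := by
    rw [Submodule.span_le]
    rintro x (rfl | rfl | rfl | rfl)
    · rw [e0]; exact hμ 0
    · rw [e1]; exact add_mem (add_mem (hμ 1) (hμ 3)) (hμ 5)
    · rw [e2]; exact hμ 8
    · rw [e5]
      exact add_mem (sub_mem (add_mem (sub_mem (add_mem (add_mem (add_mem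
        (Submodule.smul_mem _ _ (hμ 2)) (Submodule.smul_mem _ _ (hμ 3))) (hμ 4)) (hμ 5)) (hμ 6))
        (hμ 7)) (Submodule.smul_mem _ _ (hμ 8))) (Submodule.smul_mem _ _ (hμ 9))
  have hPle : Submodule.span ℤ (Set.range (compFam θ)) ≤ Submodule.span ℤ (Set.range (μ θ)) := by
    rw [Submodule.span_le]
    rintro _ ⟨i, rfl⟩
    fin_cases i
    exacts [hμ 2, hμ 3, hμ 5, hμ 6, hμ 7, hμ 9]
  have hli : LinearIndependent ℤ (xiFam θ) := by
    rw [Fintype.linearIndependent_iff]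
    intro g hg i
    have := key θ hθ g 0 (by simpa using hg)
    simp [this]
  refine ⟨?_, ?_, hle, Submodule.span ℤ (Set.range (compFam θ)), hPle, ?_, ?_⟩
  · rw [xi_set_eq]
    exact Module.Free.of_basis (Module.Basis.span hli)
  · rw [xi_set_eq]
    have := Module.finrank_eq_card_basis (Module.Basis.span hli)
    simpa using this
  · rw [xi_set_eq, eq_bot_iff]
    rintro x ⟨hx1, hx2⟩
    obtain ⟨g, hg⟩ := (Submodule.mem_span_range_iff_exists_fun ℤ).1 hx1
    obtain ⟨f, hf⟩ := (Submodule.mem_span_range_iff_exists_fun ℤ).1 hx2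
    have := key θ hθ g f (hg.trans hf.symm)
    subst this
    simpa using hg.symm
  · apply le_antisymm (sup_le hle hPle)
    set S := Submodule.span ℤ {ξ'' θ 0, ξ'' θ 1, ξ'' θ 2, ξ'' θ 5} ⊔
      Submodule.span ℤ (Set.range (compFam θ)) with hS
    have hN : ∀ x ∈ ({ξ'' θ 0, ξ'' θ 1, ξ'' θ 2, ξ'' θ 5} : Set (Fin 6 → ℂ)), x ∈ S :=
      fun x hx => Submodule.mem_sup_left (Submodule.subset_span hx)
    have hP : ∀ i, compFam θ i ∈ S :=
      fun i => Submodule.mem_sup_right (Submodule.subset_span ⟨i, rfl⟩)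
    have m2 : μ θ 2 ∈ S := hP 0
    have m3 : μ θ 3 ∈ S := hP 1
    have m5 : μ θ 5 ∈ S := hP 2
    have m6 : μ θ 6 ∈ S := hP 3
    have m7 : μ θ 7 ∈ S := hP 4
    have m9 : μ θ 9 ∈ S := hP 5
    have m0 : μ θ 0 ∈ S := e0 ▸ hN _ (by simp)
    have m8 : μ θ 8 ∈ S := e2 ▸ hN _ (by simp)
    have m1 : μ θ 1 ∈ S := by
      have : μ θ 1 = ξ'' θ 1 - μ θ 3 - μ θ 5 := by rw [e1]; abel
      rw [this]
      exact sub_mem (sub_mem (hN _ (by simp)) m3) m5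
    have m4 : μ θ 4 ∈ S := by
      have : μ θ 4 = ξ'' θ 5 - (2:ℤ) • μ θ 2 - (2:ℤ) • μ θ 3 - μ θ 5 + μ θ 6 - μ θ 7
          + (2:ℤ) • μ θ 8 - (3:ℤ) • μ θ 9 := by rw [e5]; abel
      rw [this]
      exact sub_mem (add_mem (sub_mem (add_mem (sub_mem (sub_mem (sub_mem (hN _ (by simp))
        (Submodule.smul_mem _ _ m2)) (Submodule.smul_mem _ _ m3)) m5) m6) m7)
        (Submodule.smul_mem _ _ m8)) (Submodule.smul_mem _ _ m9)
    rw [Submodule.span_le]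
    rintro _ ⟨i, rfl⟩
    fin_cases i
    exacts [m0, m1, m2, m3, m4, m5, m6, m7, m8, m9]
end
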